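/- The partial order 𝒫 is c.c.c.: for every uncountable set W ⊆ 𝒫 there exist distinct p, q ∈ W that are compatible, i.e., have a common lower bound in 𝒫. -/

import Mathlib

open Cardinal Set

/-- A condition `p = ⟨n_p, s_p, a_p, b_p, Z_p, ⟨c_p^z : z ∈ Z_p⟩⟩` of the partial
order `𝒫`. -/
structure PCond (θ : Cardinal.{0}) where
  /-- `n_p ∈ ω` -/
  n : ℕ
  /-- `s_p`, a finite subset of `θ` -/
  s : Set Ordinal.{0}
  /-- `a_p ⊆ n_p × s_p` -/
  a : Set (ℕ × Ordinal.{0})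
  /-- `b_p ⊆ n_p × s_p` -/
  b : Set (ℕ × Ordinal.{0})
  /-- `Z_p`, a finite set of subsets of `θ`, each of cardinality `≤ ℵ₁` -/
  Z : Set (Set Ordinal.{0})
  /-- `⟨c_p^z : z ∈ Z_p⟩` with `c_p^z ⊆ n_p` -/
  c : Set Ordinal.{0} → Set ℕ
  s_fin : s.Finite
  s_sub : s ⊆ Set.Iio θ.ord
  a_sub : a ⊆ Set.Iio n ×ˢ s
  b_sub : b ⊆ Set.Iio n ×ˢ s
  ab_disj : a ∩ b = ∅
  Z_fin : Z.Finite
  Z_sub : ∀ z ∈ Z, z ⊆ Set.Iio θ.ord ∧ #z ≤ Cardinal.aleph 1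
  c_sub : ∀ z ∈ Z, c z ⊆ Set.Iio n

/-- The ordering of `𝒫`:  `q ≤ p` iff conditions (1)–(5) hold. -/
def PLe (θ : Cardinal.{0}) (q p : PCond θ) : Prop :=
  (p.s ⊆ q.s ∧ p.n ≤ q.n ∧ p.Z ⊆ q.Z) ∧
  (q.a ∩ Set.Iio p.n ×ˢ p.s = p.a ∧ q.b ∩ Set.Iio p.n ×ˢ p.s = p.b) ∧
  (∀ z ∈ p.Z, q.c z ∩ Set.Iio p.n = p.c z) ∧
  (∀ ξ ∈ p.s, ∀ η ∈ p.s, ∀ l : ℕ, p.n ≤ l → l < q.n →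
    (l, ξ) ∈ q.a → (l, η) ∉ q.b) ∧
  (∀ z ∈ p.Z, ∀ ξ ∈ z ∩ p.s, ∀ l : ℕ, p.n ≤ l → l < q.n →
    ((l, ξ) ∈ q.a → l ∈ q.c z) ∧ ((l, ξ) ∈ q.b → l ∉ q.c z))

/-- Pigeonhole: an uncountable set has an uncountable fibre under a map to a countable type. -/
theorem exists_uncountable_fibre {ι : Type*} {Y : Type*} [Countable Y] (W : Set ι)
    (hW : ¬ W.Countable) (f : ι → Y) : ∃ y, ¬ {p ∈ W | f p = y}.Countable := by
  by_contra! h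
  apply hW
  refine (Set.countable_iUnion h).mono ?_
  intro p hp
  simp [hp]

/-- Finite partial functions into a countable set satisfy the c.c.c. -/
theorem finite_partial_ccc {ι : Type*} {X : Type*} {Y : Type*} [Countable Y]
    (v : ι → X → Y) (k : ℕ) : ∀ (W : Set ι) (_ : ¬ W.Countable) (D : ι → Finset X)
    (_ : ∀ p ∈ W, (D p).card = k),
    ∃ p ∈ W, ∃ q ∈ W, p ≠ q ∧ ∀ x, x ∈ D p → x ∈ D q → v p x = v q x := by
  classical
  induction k with
  | zero =>
    intro W hW D hD
    have hnt : W.Nontrivial := by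
      by_contra h
      exact hW (Set.not_nontrivial_iff.1 h).countable
    obtain ⟨p, hp, q, hq, hpq⟩ := hnt
    refine ⟨p, hp, q, hq, hpq, fun x hx => ?_⟩
    rw [Finset.card_eq_zero.1 (hD p hp)] at hx
    simp at hx
  | succ k ih =>
    intro W hW D hD
    by_cases h : ∃ x, ¬ {p ∈ W | x ∈ D p}.Countable
    · obtain ⟨x, hx⟩ := h
      obtain ⟨y, hy⟩ := exists_uncountable_fibre _ hx (fun p => v p x)
      obtain ⟨p, hp, q, hq, hpq, H⟩ := ih _ hy (fun p => (D p).erase x) (by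
        rintro p ⟨⟨hpW, hpx⟩, -⟩
        rw [Finset.card_erase_of_mem hpx, hD p hpW]; rfl)
      refine ⟨p, hp.1.1, q, hq.1.1, hpq, fun z hz hz' => ?_⟩
      by_cases hzx : z = x
      · subst hzx
        exact hp.2.trans hq.2.symm
      · exact H z (Finset.mem_erase.2 ⟨hzx, hz⟩) (Finset.mem_erase.2 ⟨hzx, hz'⟩)
    · push Not at h
      have hne : W.Nonempty := by
        by_contra h'
        rw [Set.not_nonempty_iff_eq_empty] at h'
        exact hW (h' ▸ Set.countable_empty)
      obtain ⟨p, hp⟩ := hne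
      have hc : ({p} ∪ ⋃ x ∈ D p, {q ∈ W | x ∈ D q}).Countable :=
        (Set.countable_singleton p).union
          ((D p).countable_toSet.biUnion (fun x _ => h x))
      have : ∃ q ∈ W, q ∉ ({p} ∪ ⋃ x ∈ D p, {q ∈ W | x ∈ D q}) := by
        by_contra! h'
        exact hW (hc.mono h')
      obtain ⟨q, hq, hq'⟩ := this
      refine ⟨p, hp, q, hq, ?_, fun x hx hx' => ?_⟩
      · rintro rfl
        simp at hq'
      · exfalso
        apply hq'
        right
        simp only [Set.mem_iUnion]
        exact ⟨x, hx, hq, hx'⟩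

/-- Agreement on the common part implies that the amalgam is a condition below both. -/
theorem PCond_amalgam (θ : Cardinal.{0}) (p q : PCond θ) (hn : p.n = q.n)
    (ha : ∀ l, ∀ ξ ∈ p.s, ξ ∈ q.s → ((l, ξ) ∈ p.a ↔ (l, ξ) ∈ q.a))
    (hb : ∀ l, ∀ ξ ∈ p.s, ξ ∈ q.s → ((l, ξ) ∈ p.b ↔ (l, ξ) ∈ q.b))
    (hc : ∀ z ∈ p.Z, z ∈ q.Z → p.c z = q.c z) :
    ∃ r : PCond θ, PLe θ r p ∧ PLe θ r q := by
  classical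
  have pa : ∀ l ξ, (l, ξ) ∈ p.a → l < p.n ∧ ξ ∈ p.s := fun l ξ h => p.a_sub h
  have pb : ∀ l ξ, (l, ξ) ∈ p.b → l < p.n ∧ ξ ∈ p.s := fun l ξ h => p.b_sub h
  have qa : ∀ l ξ, (l, ξ) ∈ q.a → l < p.n ∧ ξ ∈ q.s := fun l ξ h => hn ▸ q.a_sub h
  have qb : ∀ l ξ, (l, ξ) ∈ q.b → l < p.n ∧ ξ ∈ q.s := fun l ξ h => hn ▸ q.b_sub h
  have pd : ∀ x, x ∈ p.a → x ∉ p.b := fun x h h' => by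
    have : x ∈ p.a ∩ p.b := ⟨h, h'⟩
    rw [p.ab_disj] at this; exact this
  have qd : ∀ x, x ∈ q.a → x ∉ q.b := fun x h h' => by
    have : x ∈ q.a ∩ q.b := ⟨h, h'⟩
    rw [q.ab_disj] at this; exact this
  have pcs := p.c_sub
  have qcs := q.c_sub
  rw [← hn] at qcs
  refine ⟨{ n := p.n, s := p.s ∪ q.s, a := p.a ∪ q.a, b := p.b ∪ q.b, Z := p.Z ∪ q.Z
            c := fun z => if z ∈ p.Z then p.c z else q.c z
            s_fin := p.s_fin.union q.s_fin
            s_sub := Set.union_subset p.s_sub q.s_sub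
            a_sub := ?_, b_sub := ?_, ab_disj := ?_
            Z_fin := p.Z_fin.union q.Z_fin
            Z_sub := ?_, c_sub := ?_ }, ?_, ?_⟩
  · rintro ⟨l, ξ⟩ (h | h)
    · exact ⟨(pa l ξ h).1, Or.inl (pa l ξ h).2⟩
    · exact ⟨(qa l ξ h).1, Or.inr (qa l ξ h).2⟩
  · rintro ⟨l, ξ⟩ (h | h)
    · exact ⟨(pb l ξ h).1, Or.inl (pb l ξ h).2⟩
    · exact ⟨(qb l ξ h).1, Or.inr (qb l ξ h).2⟩
  · rw [Set.eq_empty_iff_forall_notMem]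
    rintro ⟨l, ξ⟩ ⟨h | h, h' | h'⟩
    · exact pd _ h h'
    · exact qd _ ((ha l ξ (pa l ξ h).2 (qb l ξ h').2).1 h) h'
    · exact qd _ h ((hb l ξ (pb l ξ h').2 (qa l ξ h).2).1 h')
    · exact qd _ h h'
  · rintro z (h | h)
    · exact p.Z_sub z h
    · exact q.Z_sub z h
  · rintro z h
    by_cases hz : z ∈ p.Z
    · simpa only [if_pos hz] using pcs z hz
    · simpa only [if_neg hz] using qcs z (h.resolve_left hz)
  · refine ⟨⟨Set.subset_union_left, le_rfl, Set.subset_union_left⟩, ⟨?_, ?_⟩, ?_, ?_, ?_⟩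
    · ext ⟨l, ξ⟩
      constructor
      · rintro ⟨h | h, -, h'⟩
        · exact h
        · exact (ha l ξ h' (qa l ξ h).2).2 h
      · intro h
        exact ⟨Or.inl h, p.a_sub h⟩
    · ext ⟨l, ξ⟩
      constructor
      · rintro ⟨h | h, -, h'⟩
        · exact h
        · exact (hb l ξ h' (qb l ξ h).2).2 h
      · intro h
        exact ⟨Or.inl h, p.b_sub h⟩
    · intro z hz
      simp only [if_pos hz]
      exact Set.inter_eq_left.2 (pcs z hz)
    · intro ξ _ η _ l h1 h2
      exact absurd h2 (not_lt.2 h1)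
    · intro z _ ξ _ l h1 h2
      exact absurd h2 (not_lt.2 h1)
  · refine ⟨⟨Set.subset_union_right, hn.ge, Set.subset_union_right⟩, ⟨?_, ?_⟩, ?_, ?_, ?_⟩
    · ext ⟨l, ξ⟩
      constructor
      · rintro ⟨h | h, -, h'⟩
        · exact (ha l ξ (pa l ξ h).2 h').1 h
        · exact h
      · intro h
        exact ⟨Or.inr h, q.a_sub h⟩
    · ext ⟨l, ξ⟩
      constructor
      · rintro ⟨h | h, -, h'⟩
        · exact (hb l ξ (pb l ξ h).2 h').1 h
        · exact h
      · intro h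
        exact ⟨Or.inr h, q.b_sub h⟩
    · intro z hz
      have : (if z ∈ p.Z then p.c z else q.c z) = q.c z := by
        split_ifs with h
        · exact hc z h hz
        · rfl
      simp only [this]
      exact Set.inter_eq_left.2 (q.c_sub z hz)
    · intro ξ _ η _ l h1 h2
      exact absurd (hn ▸ h2) (not_lt.2 h1)
    · intro z _ ξ _ l h1 h2
      exact absurd (hn ▸ h2) (not_lt.2 h1)

/-- the partial order `𝒫` is c.c.c.: every uncountable `W ⊆ 𝒫`
contains two distinct compatible conditions. -/
theorem statement11 (θ : Cardinal.{0}) (hθ : ℵ₀ < θ)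
    (W : Set (PCond θ)) (hW : ¬ W.Countable) :
    ∃ p ∈ W, ∃ q ∈ W, p ≠ q ∧ ∃ r : PCond θ, PLe θ r p ∧ PLe θ r q := by
  classical
  let D : PCond θ → Finset (Ordinal.{0} ⊕ Set Ordinal.{0}) := fun p =>
    p.s_fin.toFinset.disjSum p.Z_fin.toFinset
  let v : PCond θ → (Ordinal.{0} ⊕ Set Ordinal.{0}) → Finset ℕ × Finset ℕ := fun p x =>
    Sum.elim
      (fun ξ => ((Finset.range p.n).filter (fun l => (l, ξ) ∈ p.a),
        (Finset.range p.n).filter (fun l => (l, ξ) ∈ p.b)))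
      (fun z => ((Finset.range p.n).filter (fun l => l ∈ p.c z), ∅)) x
  obtain ⟨⟨n, k⟩, hnk⟩ := exists_uncountable_fibre W hW (fun p => (p.n, (D p).card))
  obtain ⟨p, hp, q, hq, hpq, H⟩ := finite_partial_ccc v k _ hnk D
    (fun p hp => (Prod.ext_iff.1 hp.2).2)
  have hpn : p.n = n := (Prod.ext_iff.1 hp.2).1
  have hqn : q.n = n := (Prod.ext_iff.1 hq.2).1
  have hn : p.n = q.n := hpn.trans hqn.symm
  refine ⟨p, hp.1, q, hq.1, hpq, PCond_amalgam θ p q hn ?_ ?_ ?_⟩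
  · intro l ξ h1 h2
    have h := congrArg Prod.fst (H (Sum.inl ξ) (by simpa [D] using h1) (by simpa [D] using h2))
    have h := Finset.ext_iff.1 h l
    simp only [v, Sum.elim_inl, Finset.mem_filter, Finset.mem_range] at h
    exact ⟨fun h' => (h.1 ⟨(p.a_sub h').1, h'⟩).2, fun h' => (h.2 ⟨(q.a_sub h').1, h'⟩).2⟩
  · intro l ξ h1 h2
    have h := congrArg Prod.snd (H (Sum.inl ξ) (by simpa [D] using h1) (by simpa [D] using h2))
    have h := Finset.ext_iff.1 h l
    simp only [v, Sum.elim_inl, Finset.mem_filter, Finset.mem_range] at h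
    exact ⟨fun h' => (h.1 ⟨(p.b_sub h').1, h'⟩).2, fun h' => (h.2 ⟨(q.b_sub h').1, h'⟩).2⟩
  · intro z h1 h2
    have h := congrArg Prod.fst (H (Sum.inr z) (by simpa [D] using h1) (by simpa [D] using h2))
    ext l
    have h := Finset.ext_iff.1 h l
    simp only [v, Sum.elim_inr, Finset.mem_filter, Finset.mem_range] at h
    exact ⟨fun h' => (h.1 ⟨p.c_sub z h1 h', h'⟩).2, fun h' => (h.2 ⟨q.c_sub z h2 h', h'⟩).2⟩
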